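/- Let d, t, T be natural numbers with T ≥ 2 and t ≤ T, let α ≥ 0 and β > 0 be real numbers, and let A_t, …, A_{T-1} ∈ ℝ^{d×d} be matrices with ‖A_k‖₂ ≤ m for all k. If (α/β)·m ≤ 1/T, then M = ∏_{k=t}^{T-1} (α A_k + β I) is invertible and ‖M‖₂ · ‖M⁻¹‖₂ ≤ ((T+1)/(T−1))^T ≤ 9. In particular, for this choice of α and β the condition number of M is bounded by an absolute constant independent of T. -/

import Mathlib

/-- The spectral (ℓ₂ operator) norm of a real matrix. -/
noncomputable def specNorm {m n : ℕ} (A : Matrix (Fin m) (Fin n) ℝ) : ℝ :=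
  ‖LinearMap.toContinuousLinearMap (Matrix.toEuclideanLin A)‖

section helpers
open scoped Matrix.Norms.L2Operator

lemma specNorm_eq_norm {n : ℕ} (A : Matrix (Fin n) (Fin n) ℝ) : specNorm A = ‖A‖ := rfl

lemma l2_norm_one_le (n : ℕ) : ‖(1 : Matrix (Fin n) (Fin n) ℝ)‖ ≤ 1 := by
  rw [Matrix.cstar_norm_def, map_one]
  exact ContinuousLinearMap.norm_id_le

lemma factor_bounds {n : ℕ} (A : Matrix (Fin n) (Fin n) ℝ) (α β e : ℝ) (hα : 0 ≤ α)
    (hβ : 0 < β) (he : e < 1) (h : α * ‖A‖ ≤ β * e) :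
    IsUnit (α • A + β • (1 : Matrix (Fin n) (Fin n) ℝ)) ∧
    ‖α • A + β • (1 : Matrix (Fin n) (Fin n) ℝ)‖ ≤ β * (1 + e) ∧
    ‖(α • A + β • (1 : Matrix (Fin n) (Fin n) ℝ))⁻¹‖ ≤ (β * (1 - e))⁻¹ := by
  have h1 := l2_norm_one_le n
  have hn : ‖α • A‖ ≤ β * e := by
    rw [norm_smul, Real.norm_of_nonneg hα]; exact h
  have hu : IsUnit (α • A + β • (1 : Matrix (Fin n) (Fin n) ℝ)) := by
    have hx : ‖-(β⁻¹ • (α • A))‖ < 1 := by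
      rw [norm_neg, norm_smul, Real.norm_of_nonneg (inv_nonneg.2 hβ.le)]
      calc β⁻¹ * ‖α • A‖ ≤ β⁻¹ * (β * e) := by gcongr
        _ = e := by field_simp
        _ < 1 := he
    have h2 : IsUnit (1 - -(β⁻¹ • (α • A))) := isUnit_one_sub_of_norm_lt_one hx
    have h3 : α • A + β • (1 : Matrix (Fin n) (Fin n) ℝ)
        = (Units.mk0 β hβ.ne') • (1 - -(β⁻¹ • (α • A))) := by
      rw [Units.smul_def, Units.val_mk0, sub_neg_eq_add, smul_add, smul_inv_smul₀ hβ.ne', add_comm]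
    rw [h3]
    exact h2.smul _
  refine ⟨hu, ?_, ?_⟩
  · calc _ ≤ ‖α • A‖ + ‖β • (1 : Matrix (Fin n) (Fin n) ℝ)‖ := norm_add_le _ _
      _ ≤ β * e + β * 1 := by
        rw [norm_smul β, Real.norm_of_nonneg hβ.le]; gcongr
      _ = _ := by ring
  · set B := α • A + β • (1 : Matrix (Fin n) (Fin n) ℝ) with hB
    have hmul : B * B⁻¹ = 1 := Matrix.mul_nonsing_inv _ ((Matrix.isUnit_iff_isUnit_det _).1 hu)
    have key : β • B⁻¹ = 1 - (α • A) * B⁻¹ := by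
      rw [← hmul, ← sub_mul, hB, add_sub_cancel_left, smul_mul_assoc, one_mul]
    have h4 : β * ‖B⁻¹‖ ≤ 1 + β * e * ‖B⁻¹‖ := by
      calc β * ‖B⁻¹‖ = ‖β • B⁻¹‖ := by rw [norm_smul, Real.norm_of_nonneg hβ.le]
        _ = ‖1 - (α • A) * B⁻¹‖ := by rw [key]
        _ ≤ ‖(1 : Matrix (Fin n) (Fin n) ℝ)‖ + ‖(α • A) * B⁻¹‖ := norm_sub_le _ _
        _ ≤ 1 + ‖α • A‖ * ‖B⁻¹‖ := add_le_add h1 (norm_mul_le _ _)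
        _ ≤ _ := by gcongr
    have hp : 0 < β * (1 - e) := mul_pos hβ (by linarith)
    rw [← one_div (β * (1 - e)), le_div_iff₀ hp]
    linarith

lemma prod_bounds {n : ℕ} (a b : ℝ) (ha : 0 ≤ a) (hb : 0 ≤ b) (f : ℕ → Matrix (Fin n) (Fin n) ℝ)
    (l : List ℕ) (hl : ∀ k ∈ l, IsUnit (f k) ∧ ‖f k‖ ≤ a ∧ ‖(f k)⁻¹‖ ≤ b) :
    IsUnit (l.map f).prod ∧ ‖(l.map f).prod‖ ≤ a ^ l.length ∧
      ‖((l.map f).prod)⁻¹‖ ≤ b ^ l.length := by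
  induction l with
  | nil => simpa using l2_norm_one_le n
  | cons k l ih =>
    obtain ⟨i1, i2, i3⟩ := ih (fun j hj => hl j (List.mem_cons_of_mem _ hj))
    obtain ⟨k1, k2, k3⟩ := hl k List.mem_cons_self
    simp only [List.map_cons, List.prod_cons, List.length_cons]
    refine ⟨k1.mul i1, ?_, ?_⟩
    · rw [pow_succ']
      exact (norm_mul_le _ _).trans (mul_le_mul k2 i2 (norm_nonneg _) ha)
    · rw [pow_succ, Matrix.mul_inv_rev]
      exact (norm_mul_le _ _).trans (mul_le_mul i3 k3 (norm_nonneg _) (by positivity))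

end helpers

lemma bernoulli_second_order (x : ℝ) (hx : 0 ≤ x) (n : ℕ) :
    1 + n * x + n * (n - 1) / 2 * x ^ 2 ≤ (1 + x) ^ n := by
  induction n with
  | zero => simp
  | succ n ih =>
    have h := mul_le_mul_of_nonneg_right ih (by linarith : 0 ≤ 1 + x)
    have h0 : (0 : ℝ) ≤ n * (n - 1) := by
      rcases n with _ | n
      · simp
      · push_cast; simp only [add_sub_cancel_right]; positivity
    have h3 : 0 ≤ n * (n - 1) * x ^ 3 := by positivity
    refine le_trans ?_ (h.trans_eq (pow_succ _ _).symm)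
    push_cast
    linarith

lemma ratio_pow_le_nine (T : ℕ) (hT : 2 ≤ T) :
    (((T : ℝ) + 1) / ((T : ℝ) - 1)) ^ T ≤ 9 := by
  induction T, hT using Nat.le_induction with
  | base => norm_num
  | succ T hT ih =>
    refine le_trans ?_ ih
    have h2 : (2 : ℝ) ≤ T := by exact_mod_cast hT
    have hp1 : (0 : ℝ) < T - 1 := by linarith
    have hp2 : (0 : ℝ) < T := by linarith
    set s : ℝ := (T : ℝ) with hs
    have hx : 0 ≤ 2 / ((s - 1) * (s + 2)) := by positivity
    have hB := bernoulli_second_order _ hx T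
    rw [← hs] at hB
    have e1 : (s + 1) / (s - 1) = (1 + 2 / ((s - 1) * (s + 2))) * ((s + 2) / s) := by
      field_simp; ring
    have e2 : (s + 2) / s ≤ (1 + 2 / ((s - 1) * (s + 2))) ^ T := by
      refine le_trans ?_ hB
      have : 1 + s * (2 / ((s - 1) * (s + 2))) + s * (s - 1) / 2 * (2 / ((s - 1) * (s + 2))) ^ 2
        - (s + 2) / s = 8 / (s * (s - 1) * (s + 2) ^ 2) := by
        field_simp; ring
      have h8 : 0 ≤ 8 / (s * (s - 1) * (s + 2) ^ 2) := by positivity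
      linarith
    have e3 : ((T + 1 : ℕ) : ℝ) = s + 1 := by push_cast; rfl
    rw [e3, e1, mul_pow, show (s + 1 + 1) / (s + 1 - 1) = (s + 2) / s by
      congr 1 <;> ring, pow_succ']
    gcongr

/-- For `T ≥ 2`, `t ≤ T`, `α ≥ 0`, `β > 0` and matrices `A_t, …, A_{T-1}`
with `‖A_k‖₂ ≤ m`, if `(α/β)·m ≤ 1/T` then `M = ∏_{k=t}^{T-1} (α A_k + β I)` is invertible
and `‖M‖₂ ‖M⁻¹‖₂ ≤ ((T+1)/(T−1))^T ≤ 9`: the condition number of the FastRNN gradient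
factor is bounded by an absolute constant independent of `T`. -/
theorem fastRNN_gradient_factor_well_conditioned
    (d t T : ℕ) (hT : 2 ≤ T) (htT : t ≤ T) (α β m : ℝ) (hα : 0 ≤ α) (hβ : 0 < β)
    (A : ℕ → Matrix (Fin d) (Fin d) ℝ)
    (hA : ∀ k, t ≤ k → k < T → specNorm (A k) ≤ m)
    (hm : α / β * m ≤ 1 / (T : ℝ)) :
    let M := ((List.Ico t T).map
      (fun k => α • A k + β • (1 : Matrix (Fin d) (Fin d) ℝ))).prod
    IsUnit M ∧
      specNorm M * specNorm M⁻¹ ≤ (((T : ℝ) + 1) / ((T : ℝ) - 1)) ^ T ∧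
      (((T : ℝ) + 1) / ((T : ℝ) - 1)) ^ T ≤ 9 := by
  intro M
  have h2 : (2 : ℝ) ≤ T := by exact_mod_cast hT
  have hT0 : (0 : ℝ) < T := by linarith
  have he : 1 / (T : ℝ) < 1 := by rw [div_lt_one hT0]; linarith
  have he0 : 0 ≤ 1 / (T : ℝ) := by positivity
  have hpos : 0 < β * (1 - 1 / (T : ℝ)) := mul_pos hβ (by linarith)
  obtain ⟨b1, b2, b3⟩ := prod_bounds (β * (1 + 1 / (T : ℝ))) (β * (1 - 1 / (T : ℝ)))⁻¹
    (by positivity) (by positivity)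
    (fun k => α • A k + β • (1 : Matrix (Fin d) (Fin d) ℝ)) (List.Ico t T) (by
      intro k hk
      rw [List.Ico.mem] at hk
      refine factor_bounds (A k) α β _ hα hβ he ?_
      have h3 := hA k hk.1 hk.2
      rw [specNorm_eq_norm] at h3
      calc _ ≤ α * m := mul_le_mul_of_nonneg_left h3 hα
        _ = β * (α / β * m) := by field_simp
        _ ≤ _ := mul_le_mul_of_nonneg_left hm hβ.le)
  refine ⟨b1, ?_, ratio_pow_le_nine T hT⟩
  rw [List.Ico.length] at b2 b3
  have hp1 : (0 : ℝ) < T - 1 := by linarith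
  have hr : β * (1 + 1 / (T : ℝ)) * (β * (1 - 1 / (T : ℝ)))⁻¹ = ((T : ℝ) + 1) / ((T : ℝ) - 1) := by
    have : 1 - 1 / (T : ℝ) = (T - 1) / T := by field_simp
    rw [this]
    field_simp
  have hr1 : 1 ≤ ((T : ℝ) + 1) / ((T : ℝ) - 1) := by
    rw [le_div_iff₀ hp1]; linarith
  calc specNorm M * specNorm M⁻¹
      ≤ (β * (1 + 1 / (T : ℝ))) ^ (T - t) * ((β * (1 - 1 / (T : ℝ)))⁻¹) ^ (T - t) :=
        mul_le_mul b2 b3 (norm_nonneg _) (by positivity)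
    _ = (((T : ℝ) + 1) / ((T : ℝ) - 1)) ^ (T - t) := by rw [← mul_pow, hr]
    _ ≤ _ := pow_le_pow_right₀ hr1 (Nat.sub_le _ _)
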